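/- Let α ∈ (0, π/4). Every time optimal trajectory γ of (Σ)_S on [a,b] starting at the north pole (0,0,1) is regular bang-bang: its control u satisfies |u(t)| = 1 for almost every t ∈ [a,b], and the set of switching times of u is finite. -/

import Mathlib

open Real MeasureTheory intervalIntegral

/-- The drift vector field on the sphere: `F_S(y) = cos α·(−y₂, y₁, 0)`. -/
noncomputable def FS (α : ℝ) (y : Fin 3 → ℝ) : Fin 3 → ℝ :=
  ![Real.cos α * (-(y 1)), Real.cos α * y 0, 0]

/-- The controlled vector field on the sphere: `G_S(y) = sin α·(0, −y₃, y₂)`. -/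
noncomputable def GS (α : ℝ) (y : Fin 3 → ℝ) : Fin 3 → ℝ :=
  ![0, Real.sin α * (-(y 2)), Real.sin α * y 1]

/-- An admissible pair for `(Σ)_S` on `[a,b]`: a measurable control `u : [a,b] → [-1,1]`
together with an absolutely continuous curve `γ : [a,b] → S²` solving
`γ' = F_S(γ) + u·G_S(γ)` a.e. (expressed in integral form, componentwise). -/
structure AdmissiblePairS (α a b : ℝ) (γ : ℝ → Fin 3 → ℝ) (u : ℝ → ℝ) : Prop where
  hab : a ≤ b
  humeas : Measurable u
  hubound : ∀ t ∈ Set.Icc a b, |u t| ≤ 1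
  hsph : ∀ t ∈ Set.Icc a b, (γ t 0) ^ 2 + (γ t 1) ^ 2 + (γ t 2) ^ 2 = 1
  hcont : ContinuousOn γ (Set.Icc a b)
  hode : ∀ t ∈ Set.Icc a b, ∀ i,
    γ t i = γ a i + ∫ s in a..t, (FS α (γ s) i + u s * GS α (γ s) i)

/-- Time optimality for `(Σ)_S`. -/
def TimeOptimalS (α a b : ℝ) (γ : ℝ → Fin 3 → ℝ) (u : ℝ → ℝ) : Prop :=
  AdmissiblePairS α a b γ u ∧
  ∀ a' b' γ' u', AdmissiblePairS α a' b' γ' u' →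
    γ' a' = γ a → γ' b' = γ b → b - a ≤ b' - a'

/-- `t` is a switching time of the control `u : [a,b] → [-1,1]`. -/
def IsSwitching (a b : ℝ) (u : ℝ → ℝ) (t : ℝ) : Prop :=
  t ∈ Set.Icc a b ∧ ∀ ε > 0, ¬ ∃ c : ℝ, (c = 1 ∨ c = -1) ∧
    ∀ᵐ s ∂(volume.restrict (Set.Ioo (t - ε) (t + ε) ∩ Set.Icc a b)), u s = c


/-- `f` is a primitive of the integrable function `f'` on `[a,b]`. -/
def Prim (a b : ℝ) (f f' : ℝ → ℝ) : Prop :=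
  IntervalIntegrable f' volume a b ∧ ∀ t ∈ Set.Icc a b, f t = f a + ∫ s in a..t, f' s

lemma Prim.congr {a b : ℝ} {f f' g' : ℝ → ℝ} (hab : a ≤ b) (h : Prim a b f f')
    (hg : ∀ t ∈ Set.Icc a b, f' t = g' t) : Prim a b f g' := by
  refine ⟨h.1.congr ?_, fun t ht => ?_⟩
  · intro t ht
    rw [Set.uIoc_of_le hab] at ht
    exact hg t ⟨ht.1.le, ht.2⟩
  · rw [h.2 t ht]
    congr 1
    apply intervalIntegral.integral_congr
    intro s hs
    rw [Set.uIcc_of_le ht.1] at hs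
    exact hg s ⟨hs.1, hs.2.trans ht.2⟩

lemma Prim.add {a b : ℝ} {f f' g g' : ℝ → ℝ} (hf : Prim a b f f')
    (hg : Prim a b g g') : Prim a b (fun t => f t + g t) (fun t => f' t + g' t) := by
  refine ⟨hf.1.add hg.1, fun t ht => ?_⟩
  have hsub : Set.uIcc a t ⊆ Set.uIcc a b := by
    rw [Set.uIcc_of_le ht.1, Set.uIcc_of_le (ht.1.trans ht.2)]
    exact Set.Icc_subset_Icc_right ht.2
  have h1 := hf.2 t ht
  have h2 := hg.2 t ht
  rw [intervalIntegral.integral_add (hf.1.mono_set hsub) (hg.1.mono_set hsub)]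
  simp only
  linarith

lemma Prim.const_mul {a b : ℝ} {f f' : ℝ → ℝ} (c : ℝ) (hf : Prim a b f f') :
    Prim a b (fun t => c * f t) (fun t => c * f' t) := by
  refine ⟨hf.1.const_mul c, fun t ht => ?_⟩
  have h1 := hf.2 t ht
  rw [intervalIntegral.integral_const_mul]
  simp only
  rw [h1]
  ring

lemma Prim.mul {a b : ℝ} (hab : a ≤ b) {f f' g g' : ℝ → ℝ} (hf : Prim a b f f')
    (hg : Prim a b g g') :
    Prim a b (fun t => f t * g t) (fun t => f' t * g t + f t * g' t) := by
  set F : ℝ → ℝ := fun x => f a + ∫ s in a..x, f' s with hF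
  set G : ℝ → ℝ := fun x => g a + ∫ s in a..x, g' s with hG
  have acc : ∀ c : ℝ, AbsolutelyContinuousOnInterval (fun _ : ℝ => c) a b := fun c =>
    (LipschitzWith.const c).lipschitzOnWith.absolutelyContinuousOnInterval
  have acF : AbsolutelyContinuousOnInterval F a b :=
    (acc (f a)).add (hf.1.absolutelyContinuousOnInterval_intervalIntegral (by simp))
  have acG : AbsolutelyContinuousOnInterval G a b :=
    (acc (g a)).add (hg.1.absolutelyContinuousOnInterval_intervalIntegral (by simp))
  have int : IntervalIntegrable (fun t => f' t * G t + F t * g' t) volume a b :=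
    (hf.1.mul_continuousOn acG.continuousOn).add (hg.1.continuousOn_mul acF.continuousOn)
  have eF : ∀ t ∈ Set.Icc a b, F t = f t := fun t ht => (hf.2 t ht).symm
  have eG : ∀ t ∈ Set.Icc a b, G t = g t := fun t ht => (hg.2 t ht).symm
  have main : Prim a b (fun t => f t * g t) (fun t => f' t * G t + F t * g' t) := by
    refine ⟨int, ?_⟩
    have acP : AbsolutelyContinuousOnInterval
        (fun x => F x * G x - ∫ s in a..x, (f' s * G s + F s * g' s)) a b :=
      (acF.fun_mul acG).sub (int.absolutelyContinuousOnInterval_intervalIntegral (by simp))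
    obtain ⟨C, hC⟩ := acP.const_of_ae_hasDerivAt_zero (by
      filter_upwards [hf.1.ae_hasDerivAt_integral, hg.1.ae_hasDerivAt_integral,
        int.ae_hasDerivAt_integral] with x h1 h2 h3 hx
      have d1 : HasDerivAt F (f' x) x := (h1 hx a (by simp)).const_add (f a)
      have d2 : HasDerivAt G (g' x) x := (h2 hx a (by simp)).const_add (g a)
      have := (d1.mul d2).sub (h3 hx a (by simp))
      convert! this using 1
      ring)
    intro t ht
    have h1 := hC t (by rwa [Set.uIcc_of_le hab])
    have h2 := hC a (by simp)
    simp only [intervalIntegral.integral_same, sub_zero] at h2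
    rw [eF t ht, eG t ht] at h1
    rw [eF a ⟨le_refl _, hab⟩, eG a ⟨le_refl _, hab⟩] at h2
    linarith
  refine main.congr hab fun t ht => ?_
  rw [eF t ht, eG t ht]

lemma Prim.eq_of_zero {a b : ℝ} {f f' : ℝ → ℝ} (hf : Prim a b f f')
    (h : ∀ t ∈ Set.Icc a b, f' t = 0) : ∀ t ∈ Set.Icc a b, f t = f a := by
  intro t ht
  rw [hf.2 t ht, intervalIntegral.integral_congr (g := fun _ => 0)]
  · simp
  · intro s hs
    rw [Set.uIcc_of_le ht.1] at hs
    exact h s ⟨hs.1, hs.2.trans ht.2⟩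

/-- A local solvability lemma based on the inverse function theorem. -/
lemma solve_small (f : (ℝ × ℝ) × ℝ → ℝ × ℝ) (f0 : f 0 = 0)
    (hf : HasStrictFDerivAt f (ContinuousLinearMap.fst ℝ (ℝ × ℝ) ℝ) 0)
    (U : Set ((ℝ × ℝ) × ℝ)) (hU : U ∈ nhds (0 : (ℝ × ℝ) × ℝ)) (δ : ℝ) (hδ : 0 < δ) :
    ∃ k x y : ℝ, 0 < k ∧ k < δ ∧ |x| < k ∧ |y| < k ∧ ((x, y), k) ∈ U ∧ f ((x, y), k) = 0 := by
  set P : (ℝ × ℝ) × ℝ → (ℝ × ℝ) × ℝ := fun θ => (f θ, θ.2) with hP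
  have hPd : HasStrictFDerivAt P
      ((ContinuousLinearEquiv.refl ℝ ((ℝ × ℝ) × ℝ) : ((ℝ × ℝ) × ℝ) ≃L[ℝ] ((ℝ × ℝ) × ℝ)) :
        (ℝ × ℝ) × ℝ →L[ℝ] (ℝ × ℝ) × ℝ) 0 := by
    have h := hf.prodMk (hasStrictFDerivAt_snd (𝕜 := ℝ) (E := ℝ × ℝ) (F := ℝ) (p := 0))
    exact h.congr_fderiv (by ext <;> simp)
  have P0 : P 0 = 0 := by simp [hP, f0]
  have hr := hPd.eventually_right_inverse
  have hg := hPd.to_localInverse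
  have ht := hPd.localInverse_tendsto
  set g := hPd.localInverse P (ContinuousLinearEquiv.refl ℝ ((ℝ × ℝ) × ℝ)) 0 with hgdef
  have g0 : g (P 0) = 0 := hPd.localInverse_apply_image
  rw [P0] at hr hg ht g0
  have hlin : Filter.Tendsto (fun k : ℝ => (((0 : ℝ × ℝ), k) : (ℝ × ℝ) × ℝ)) (nhdsWithin 0 (Set.Ioi 0))
      (nhds 0) := by
    have : Continuous (fun k : ℝ => (((0 : ℝ × ℝ), k) : (ℝ × ℝ) × ℝ)) := by fun_prop
    exact (this.tendsto 0).mono_left nhdsWithin_le_nhds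
  have hlo := hg.hasFDerivAt.isLittleO.def (c := 1/2) (by norm_num)
  have e1 := hlin.eventually hr
  have e2 := hlin.eventually hlo
  have e3 := hlin.eventually (ht hU)
  have e4 : ∀ᶠ k : ℝ in nhdsWithin 0 (Set.Ioi 0), 0 < k ∧ k < δ := by
    filter_upwards [Ioo_mem_nhdsGT hδ] with k hk using hk
  obtain ⟨k, h1, h2, h3, h4, h5⟩ := (e1.and (e2.and (e3.and e4))).exists
  have hs : (g (0, k)).2 = k := congrArg Prod.snd h1
  have hf0 : f (g (0, k)) = 0 := congrArg Prod.fst h1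
  have h2' : ‖g (0, k) - (0, k)‖ ≤ 1/2 * k := by
    have := h2
    rw [g0] at this
    simp only [sub_zero, Prod.norm_mk, norm_zero] at this
    have hk : max 0 ‖k‖ = k := by
      rw [Real.norm_eq_abs, abs_of_pos h4]; exact max_eq_right h4.le
    rw [hk] at this
    simpa using this
  have h3' : g (0, k) ∈ U := h3
  rcases hq : g (0, k) with ⟨⟨x, y⟩, k'⟩
  rw [hq] at hs h2' hf0 h3'
  simp only at hs
  subst hs
  refine ⟨k', x, y, h4, h5, ?_, ?_, h3', hf0⟩
  · have : ‖x‖ ≤ 1/2 * k' := le_trans (by simp [Prod.norm_def]) h2'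
    rw [Real.norm_eq_abs] at this; linarith
  · have : ‖y‖ ≤ 1/2 * k' := le_trans (by simp [Prod.norm_def]) h2'
    rw [Real.norm_eq_abs] at this; linarith

/-- Perturbation of a linear equation in a Banach space. -/
lemma perturb {X : Type*} [NormedAddCommGroup X] [NormedSpace ℝ X] [CompleteSpace X]
    (T0 D1 D2 D3 D4 : X →L[ℝ] X) (hT0 : IsUnit (1 - T0)) (n y0 Z1 Z2 Z3 Z4 : X)
    (hy0 : y0 = T0 y0 + n)
    (hZ1 : Z1 = T0 Z1 + D1 y0) (hZ2 : Z2 = T0 Z2 + D2 y0)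
    (hZ3 : Z3 = T0 Z3 + D3 y0) (hZ4 : Z4 = T0 Z4 + D4 y0)
    (A B C : X →L[ℝ] ℝ) (hA : A y0 = 0) (hB : B y0 = 0) (hC : 0 < C y0)
    (hA1 : A Z1 = 1) (hA2 : A Z2 = -1) (hA3 : A Z3 = 0) (hA4 : A Z4 = 0)
    (hB1 : B Z1 = 0) (hB2 : B Z2 = 0) (hB3 : B Z3 = 1) (hB4 : B Z4 = -1)
    (δ : ℝ) (hδ : 0 < δ) :
    ∃ k x z : ℝ, 0 < k ∧ k < δ ∧ |x| < k ∧ |z| < k ∧ ∃ y : X,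
      y = ((1 - k ^ 2) • (T0 + (k + x) • D1 + k • D2 + (k + z) • D3 + k • D4)) y + n ∧
      A y = 0 ∧ B y = 0 ∧ 0 < C y := by
  set T : (ℝ × ℝ) × ℝ → (X →L[ℝ] X) := fun θ =>
    (1 - θ.2 ^ 2) • (T0 + (θ.2 + θ.1.1) • D1 + θ.2 • D2 + (θ.2 + θ.1.2) • D3 + θ.2 • D4) with hT
  have hT0' : T 0 = T0 := by simp [hT]
  obtain ⟨R, hR⟩ := hT0
  -- explicit derivative of `T`
  set l3 : (ℝ × ℝ) × ℝ →L[ℝ] ℝ := ContinuousLinearMap.snd ℝ (ℝ × ℝ) ℝ with hl3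
  set l1 : (ℝ × ℝ) × ℝ →L[ℝ] ℝ :=
    (ContinuousLinearMap.fst ℝ ℝ ℝ).comp (ContinuousLinearMap.fst ℝ (ℝ × ℝ) ℝ) with hl1
  set l2 : (ℝ × ℝ) × ℝ →L[ℝ] ℝ :=
    (ContinuousLinearMap.snd ℝ ℝ ℝ).comp (ContinuousLinearMap.fst ℝ (ℝ × ℝ) ℝ) with hl2
  set T' : (ℝ × ℝ) × ℝ →L[ℝ] (X →L[ℝ] X) :=
    (l3 + l1).smulRight D1 + l3.smulRight D2 + (l3 + l2).smulRight D3 + l3.smulRight D4 with hT'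
  have dT : HasStrictFDerivAt T T' 0 := by
    have i1 : HasStrictFDerivAt (fun θ : (ℝ × ℝ) × ℝ =>
        T0 + (θ.2 + θ.1.1) • D1 + θ.2 • D2 + (θ.2 + θ.1.2) • D3 + θ.2 • D4) T' 0 := by
      have := (T'.hasStrictFDerivAt (x := 0)).const_add T0
      have e : (fun θ : (ℝ × ℝ) × ℝ =>
        T0 + (θ.2 + θ.1.1) • D1 + θ.2 • D2 + (θ.2 + θ.1.2) • D3 + θ.2 • D4) =
          fun θ => T0 + T' θ := by
        funext θ
        simp [hT', hl1, hl2, hl3]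
        abel
      rw [e]
      exact this
    have i2 : HasStrictFDerivAt (fun θ : (ℝ × ℝ) × ℝ => 1 - θ.2 ^ 2)
        (0 : (ℝ × ℝ) × ℝ →L[ℝ] ℝ) 0 := by
      have := ((l3.hasStrictFDerivAt (x := 0)).pow 2).const_sub 1
      exact this.congr_fderiv (by ext <;> simp [hl3])
    have := i2.smul i1
    exact this.congr_fderiv (by ext <;> simp)
  have d1T : HasStrictFDerivAt (fun θ => (1 : X →L[ℝ] X) - T θ) (-T') 0 := dT.const_sub 1
  have hRv : (R : X →L[ℝ] X) = (fun θ => (1 : X →L[ℝ] X) - T θ) 0 := by rw [hR]; simp [hT0']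
  have dinv := hasStrictFDerivAt_ringInverse (𝕜 := ℝ) R
  rw [hRv] at dinv
  have dcomp := dinv.comp 0 d1T
  set Y : (ℝ × ℝ) × ℝ → X := fun θ => (Ring.inverse ((1 : X →L[ℝ] X) - T θ)) n with hY
  set Rinv : X →L[ℝ] X := ((R⁻¹ : (X →L[ℝ] X)ˣ) : X →L[ℝ] X) with hRinv
  have inv1 : ∀ w : X, Rinv ((1 - T0) w) = w := by
    intro w
    have : Rinv * (1 - T0) = 1 := by rw [← hR]; exact R.inv_mul
    exact congrArg (fun L : X →L[ℝ] X => L w) this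
  have Ry0 : Rinv n = y0 := by
    have : (1 - T0) y0 = n := by
      simp only [sub_apply, one_apply_eq_self]
      exact sub_eq_of_eq_add' hy0
    rw [← this]; exact inv1 y0
  have RZ : ∀ (Z : X) (D : X →L[ℝ] X), Z = T0 Z + D y0 → Rinv (D y0) = Z := by
    intro Z D h
    have : (1 - T0) Z = D y0 := by
      simp only [sub_apply, one_apply_eq_self]
      exact sub_eq_of_eq_add' h
    rw [← this]; exact inv1 Z
  have Y0 : Y 0 = y0 := by
    simp only [hY]
    have : (1 : X →L[ℝ] X) - T 0 = R := by rw [hT0', hR]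
    rw [this, Ring.inverse_unit]
    exact Ry0
  have dY := (ContinuousLinearMap.apply ℝ X n).hasStrictFDerivAt.comp 0 dcomp
  have dA := A.hasStrictFDerivAt.comp 0 dY
  have dB := B.hasStrictFDerivAt.comp 0 dY
  have dAB := dA.prodMk dB
  have key := solve_small (fun θ => (A (Y θ), B (Y θ))) (by simp [Y0, hA, hB]) (by
    refine dAB.congr_fderiv ?_
    ext <;>
    simp [ContinuousLinearMap.mulLeftRight_apply, hT', hl1, hl2, hl3, Ry0, ← hRinv, RZ Z1 D1 hZ1, RZ Z2 D2 hZ2,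
      RZ Z3 D3 hZ3, RZ Z4 D4 hZ4, hA1, hA2, hA3, hA4, hB1, hB2, hB3, hB4])
  have cY : ContinuousAt Y 0 := dY.continuousAt
  have hU1 : ∀ᶠ θ in nhds (0 : (ℝ × ℝ) × ℝ), 0 < C (Y θ) := by
    have : ContinuousAt (fun θ => C (Y θ)) 0 := C.continuous.continuousAt.comp cY
    exact this.eventually (lt_mem_nhds (show 0 < C (Y 0) by rw [Y0]; exact hC))
  have hU2 : ∀ᶠ θ in nhds (0 : (ℝ × ℝ) × ℝ), IsUnit ((1 : X →L[ℝ] X) - T θ) := by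
    have := d1T.continuousAt.eventually (Units.isOpen.mem_nhds (show IsUnit ((1 : X →L[ℝ] X) - T 0) by
      rw [hT0', ← hR]; exact R.isUnit))
    exact this
  obtain ⟨k, x, z, h1, h2, h3, h4, h5, h6⟩ := key _ (hU1.and hU2) δ hδ
  refine ⟨k, x, z, h1, h2, h3, h4, Y ((x, z), k), ?_, congrArg Prod.fst h6, congrArg Prod.snd h6, h5.1⟩
  have hm := Ring.mul_inverse_cancel _ h5.2
  have := congrArg (fun L : X →L[ℝ] X => L n) hm
  simp only [ContinuousLinearMap.mul_apply', one_apply_eq_self,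
    sub_apply] at this
  exact (sub_eq_iff_eq_add'.mp this)

lemma intervalIntegrable_bdd_smul {V : Type*} [NormedAddCommGroup V] [NormedSpace ℝ V]
    {f : ℝ → ℝ} {g : ℝ → V} (hf : Measurable f)
    (hb : ∀ t, |f t| ≤ 2) (hg : Continuous g) (a b : ℝ) :
    IntervalIntegrable (fun s => f s • g s) volume a b := by
  have h2 : Continuous (fun s => 2 * ‖g s‖) := by fun_prop
  refine (h2.intervalIntegrable a b).mono_fun' ?_ ?_
  · exact hf.aestronglyMeasurable.smul hg.aestronglyMeasurable
  · refine Filter.Eventually.of_forall fun s => ?_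
    simp only [norm_smul, Real.norm_eq_abs]
    exact mul_le_mul_of_nonneg_right (hb s) (norm_nonneg _)

/-- The space of continuous curves in `ℝ³`. -/
abbrev CX (a b : ℝ) := C(Set.Icc a b, Fin 3 → ℝ)

lemma cont_ext {a b : ℝ} (hab : a ≤ b) (y : CX a b) : Continuous (Set.IccExtend hab y) :=
  y.continuous.Icc_extend'

/-- The Volterra operator `y ↦ ∫ f • B y`. -/
noncomputable def vol {a b : ℝ} (hab : a ≤ b) (f : ℝ → ℝ) (hf : Measurable f)
    (hb : ∀ t, |f t| ≤ 2) (B : (Fin 3 → ℝ) →L[ℝ] (Fin 3 → ℝ)) : CX a b →L[ℝ] CX a b :=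
  LinearMap.mkContinuous
    { toFun := fun y => ⟨fun t => ∫ s in a..(t : ℝ), f s • B (Set.IccExtend hab y s), by
        have := intervalIntegral.continuous_primitive (fun c d => intervalIntegrable_bdd_smul hf hb
          (B.continuous.comp (cont_ext hab y)) c d) a
        exact this.comp continuous_subtype_val⟩
      map_add' := by
        intro y z
        ext1 t
        simp only [ContinuousMap.coe_mk, ContinuousMap.add_apply]
        refine Eq.trans ?_ (intervalIntegral.integral_add
          (intervalIntegrable_bdd_smul hf hb (B.continuous.comp (cont_ext hab y)) _ _)
          (intervalIntegrable_bdd_smul hf hb (B.continuous.comp (cont_ext hab z)) _ _))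
        apply intervalIntegral.integral_congr
        intro s _
        simp [Set.IccExtend]
      map_smul' := by
        intro c y
        ext1 t
        simp only [ContinuousMap.coe_mk, ContinuousMap.smul_apply, RingHom.id_apply]
        rw [← intervalIntegral.integral_smul]
        apply intervalIntegral.integral_congr
        intro s _
        simp [Set.IccExtend, smul_comm c] }
    (2 * ‖B‖ * (b - a)) (by
      intro y
      have hba : 0 ≤ b - a := sub_nonneg.mpr hab
      rw [ContinuousMap.norm_le _ (by positivity)]
      intro t
      simp only [LinearMap.coe_mk, AddHom.coe_mk, ContinuousMap.coe_mk]
      have hle : ∀ s ∈ Set.uIoc a (t : ℝ), ‖f s • B (Set.IccExtend hab y s)‖ ≤ 2 * ‖B‖ * ‖y‖ := by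
        intro s _
        rw [norm_smul, Real.norm_eq_abs, mul_assoc]
        refine mul_le_mul (hb s) ?_ (norm_nonneg _) (by norm_num)
        exact (B.le_opNorm _).trans (mul_le_mul_of_nonneg_left (y.norm_coe_le_norm _) (norm_nonneg _))
      refine (intervalIntegral.norm_integral_le_of_norm_le_const hle).trans ?_
      have : |(t : ℝ) - a| ≤ b - a := by
        rw [abs_of_nonneg (sub_nonneg.mpr t.2.1)]
        linarith [t.2.2]
      calc 2 * ‖B‖ * ‖y‖ * |(t : ℝ) - a| ≤ 2 * ‖B‖ * ‖y‖ * (b - a) := by gcongr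
        _ = _ := by ring)

lemma vol_apply {a b : ℝ} (hab : a ≤ b) (f : ℝ → ℝ) (hf : Measurable f)
    (hb : ∀ t, |f t| ≤ 2) (B : (Fin 3 → ℝ) →L[ℝ] (Fin 3 → ℝ)) (y : CX a b) (t : Set.Icc a b) :
    vol hab f hf hb B y t = ∫ s in a..(t : ℝ), f s • B (Set.IccExtend hab y s) := rfl

lemma vol_apply_coord {a b : ℝ} (hab : a ≤ b) (f : ℝ → ℝ) (hf : Measurable f)
    (hb : ∀ t, |f t| ≤ 2) (B : (Fin 3 → ℝ) →L[ℝ] (Fin 3 → ℝ)) (y : CX a b) (t : Set.Icc a b)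
    (i : Fin 3) :
    vol hab f hf hb B y t i = ∫ s in a..(t : ℝ), f s * B (Set.IccExtend hab y s) i := by
  rw [vol_apply]
  have := (ContinuousLinearMap.proj (R := ℝ) (φ := fun _ : Fin 3 => ℝ) i).intervalIntegral_comp_comm
    (intervalIntegrable_bdd_smul hf hb (B.continuous.comp (cont_ext hab y)) a (t : ℝ))
  simpa using this.symm

/-- Causal estimate implies invertibility of `1 - T`. -/
lemma isUnit_of_causal {a b : ℝ} (hab : a ≤ b) (T : CX a b →L[ℝ] CX a b) (K : ℝ) (hK : 0 ≤ K)
    (hT : ∀ (y : CX a b) (t : Set.Icc a b),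
      ‖T y t‖ ≤ K * ∫ s in a..(t : ℝ), ‖Set.IccExtend hab y s‖) : IsUnit (1 - T) := by
  have hba : 0 ≤ b - a := sub_nonneg.mpr hab
  have key : ∀ (n : ℕ) (y : CX a b) (t : Set.Icc a b),
      ‖(T ^ n) y t‖ ≤ K ^ n * ((t : ℝ) - a) ^ n / (n.factorial : ℝ) * ‖y‖ := by
    intro n
    induction n with
    | zero => intro y t; simpa using y.norm_coe_le_norm t
    | succ n ih =>
      intro y t
      rw [pow_succ']
      refine (hT _ t).trans ?_
      have hmono : ∫ s in a..(t : ℝ), ‖Set.IccExtend hab ((T ^ n) y) s‖ ≤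
          ∫ s in a..(t : ℝ), K ^ n / (n.factorial : ℝ) * ‖y‖ * (s - a) ^ n := by
        apply intervalIntegral.integral_mono_on t.2.1
        · exact ((cont_ext hab _).norm).intervalIntegrable _ _
        · exact (by fun_prop : Continuous fun s : ℝ =>
            K ^ n / (n.factorial : ℝ) * ‖y‖ * (s - a) ^ n).intervalIntegrable _ _
        · intro s hs
          have hs' : s ∈ Set.Icc a b := ⟨hs.1, hs.2.trans t.2.2⟩
          rw [Set.IccExtend_of_mem hab _ hs']
          refine (ih y ⟨s, hs'⟩).trans (le_of_eq ?_)
          simp only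
          ring
      refine (mul_le_mul_of_nonneg_left hmono hK).trans (le_of_eq ?_)
      rw [intervalIntegral.integral_const_mul,
        intervalIntegral.integral_comp_sub_right (fun x => x ^ n) a, integral_pow]
      rw [Nat.factorial_succ]
      push_cast
      have h1 : (n : ℝ) + 1 ≠ 0 := by positivity
      have h2 : (n.factorial : ℝ) ≠ 0 := by positivity
      simp only [sub_self]
      field_simp
      ring
  have hnorm : ∀ n : ℕ, ‖T ^ n‖ ≤ (K * (b - a)) ^ n / (n.factorial : ℝ) := by
    intro n
    refine ContinuousLinearMap.opNorm_le_bound _ (by positivity) fun y => ?_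
    rw [ContinuousMap.norm_le _ (by positivity)]
    intro t
    refine (key n y t).trans ?_
    rw [mul_pow]
    have h0 : 0 ≤ (t : ℝ) - a := sub_nonneg.mpr t.2.1
    have h1 : (t : ℝ) - a ≤ b - a := by linarith [t.2.2]
    gcongr
  obtain ⟨n, hn⟩ := ((FloorSemiring.tendsto_pow_div_factorial_atTop (K * (b - a))).eventually
    (gt_mem_nhds (zero_lt_one))).exists
  have hu : IsUnit (1 - T ^ n) := isUnit_one_sub_of_norm_lt_one
    (R := CX a b →L[ℝ] CX a b) (x := T ^ n) ((hnorm n).trans_lt hn)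
  rw [← mul_neg_geom_sum] at hu
  have hc : Commute (1 - T) (∑ i ∈ Finset.range n, T ^ i) := by
    refine Commute.sum_right _ _ _ fun i _ => ?_
    exact ((Commute.one_left _).sub_left ((Commute.refl T).pow_right i))
  exact (hc.isUnit_mul_iff.mp hu).1

/-- In a finite-dimensional space a convex set containing `0` but not in its interior lies in a
half space. -/
lemma exists_halfspace (S : Set (ℝ × ℝ)) (hS : Convex ℝ S) (h0 : (0 : ℝ × ℝ) ∈ S)
    (h : (0 : ℝ × ℝ) ∉ interior S) :
    ∃ p : ℝ × ℝ, p ≠ 0 ∧ ∀ z ∈ S, p.1 * z.1 + p.2 * z.2 ≤ 0 := by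
  have main : ∃ f : StrongDual ℝ (ℝ × ℝ), f ≠ 0 ∧ ∀ z ∈ S, f z ≤ 0 := by
    by_cases hne : (interior S).Nonempty
    · obtain ⟨f, hf, hf'⟩ := geometric_hahn_banach_of_nonempty_interior_point hS h hne
      exact ⟨f, hf, fun z hz => by simpa using hf' z hz⟩
    · rw [hS.interior_nonempty_iff_affineSpan_eq_top] at hne
      have hsp : Submodule.span ℝ S ≠ ⊤ := by
        intro htop
        apply hne
        rw [AffineSubspace.affineSpan_eq_top_iff_vectorSpan_eq_top_of_nonempty ℝ _ _ ⟨0, h0⟩,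
          vectorSpan_eq_span_vsub_set_right ℝ h0]
        simpa using htop
      obtain ⟨f, hf, hf'⟩ := Submodule.exists_le_ker_of_lt_top _ (lt_top_iff_ne_top.mpr hsp)
      refine ⟨LinearMap.toContinuousLinearMap f, ?_, fun z hz => ?_⟩
      · intro h; exact hf (by simpa using h)
      · have := hf' (Submodule.subset_span hz)
        simp only [LinearMap.mem_ker] at this
        simp [this]
  obtain ⟨f, hf, hf'⟩ := main
  have hz : ∀ z : ℝ × ℝ, f z = f (1, 0) * z.1 + f (0, 1) * z.2 := by
    intro z
    have : z = z.1 • ((1, 0) : ℝ × ℝ) + z.2 • ((0, 1) : ℝ × ℝ) := by ext <;> simp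
    conv_lhs => rw [this]
    rw [map_add, map_smul, map_smul]
    simp only [smul_eq_mul]; ring
  refine ⟨(f (1, 0), f (0, 1)), ?_, fun z hzS => ?_⟩
  · intro h
    apply hf
    refine ContinuousLinearMap.ext fun z => ?_
    rw [Prod.mk_eq_zero] at h
    rw [hz, h.1, h.2]
    simp
  · have := hf' z hzS
    rw [hz] at this
    exact this

/-- Admissible scalar controls. -/
def Adm (v : ℝ → ℝ) : Prop := Measurable v ∧ ∀ t, |v t| ≤ 1

lemma Adm.sub_le {u v : ℝ → ℝ} (hv : Adm v) (hu : Adm u) (t : ℝ) : |v t - u t| ≤ 2 := by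
  have := abs_sub (v t) (u t)
  linarith [hv.2 t, hu.2 t]

lemma Adm.int {u v k : ℝ → ℝ} (hv : Adm v) (hu : Adm u) (hk : Continuous k) (a b : ℝ) :
    IntervalIntegrable (fun s => (v s - u s) * k s) volume a b :=
  intervalIntegrable_bdd_smul (hv.1.sub hu.1) (hv.sub_le hu) hk a b

lemma dichotomy (a b : ℝ) (u k1 k2 : ℝ → ℝ) (hu : Adm u) (hk1 : Continuous k1)
    (hk2 : Continuous k2) :
    (∃ p : ℝ × ℝ, p ≠ 0 ∧ ∀ v, Adm v → ∫ s in a..b, (v s - u s) * (p.1 * k1 s + p.2 * k2 s) ≤ 0) ∨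
    (∃ r > 0, ∀ x y : ℝ, |x| ≤ r → |y| ≤ r → ∃ v, Adm v ∧ ∫ s in a..b, (v s - u s) * k1 s = x ∧
      ∫ s in a..b, (v s - u s) * k2 s = y) := by
  set S : Set (ℝ × ℝ) := {z | ∃ v, Adm v ∧ ∫ s in a..b, (v s - u s) * k1 s = z.1 ∧
      ∫ s in a..b, (v s - u s) * k2 s = z.2} with hS
  have hconv : Convex ℝ S := by
    rintro z ⟨v, hv, h1, h2⟩ z' ⟨v', hv', h1', h2'⟩ c d hc hd hcd
    refine ⟨fun t => c * v t + d * v' t, ⟨?_, ?_⟩, ?_, ?_⟩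
    · exact (hv.1.const_mul c).add (hv'.1.const_mul d)
    · intro t
      have e1 := abs_le.mp (hv.2 t)
      have e2 := abs_le.mp (hv'.2 t)
      rw [abs_le]
      constructor <;> nlinarith
    · have : ∀ s, (c * v s + d * v' s - u s) * k1 s =
          c * ((v s - u s) * k1 s) + d * ((v' s - u s) * k1 s) := by
        intro s
        have : d = 1 - c := by linarith
        subst this; ring
      simp_rw [this]
      rw [intervalIntegral.integral_add ((hv.int hu hk1 a b).const_mul c)
        ((hv'.int hu hk1 a b).const_mul d), intervalIntegral.integral_const_mul,
        intervalIntegral.integral_const_mul, h1, h1']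
      simp
    · have : ∀ s, (c * v s + d * v' s - u s) * k2 s =
          c * ((v s - u s) * k2 s) + d * ((v' s - u s) * k2 s) := by
        intro s
        have : d = 1 - c := by linarith
        subst this; ring
      simp_rw [this]
      rw [intervalIntegral.integral_add ((hv.int hu hk2 a b).const_mul c)
        ((hv'.int hu hk2 a b).const_mul d), intervalIntegral.integral_const_mul,
        intervalIntegral.integral_const_mul, h2, h2']
      simp
  have h0 : (0 : ℝ × ℝ) ∈ S := ⟨u, hu, by simp, by simp⟩
  by_cases hin0 : (0 : ℝ × ℝ) ∈ interior S
  · right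
    rw [mem_interior_iff_mem_nhds, Metric.mem_nhds_iff] at hin0
    obtain ⟨ε, hε, hball⟩ := hin0
    refine ⟨ε / 2, by positivity, fun x y hx hy => ?_⟩
    have : ((x, y) : ℝ × ℝ) ∈ S := by
      apply hball
      rw [mem_ball_zero_iff, Prod.norm_def]
      simp only [Real.norm_eq_abs]
      exact max_lt (by linarith) (by linarith)
    exact this
  · left
    obtain ⟨p, hp, hp'⟩ := exists_halfspace S hconv h0 hin0
    refine ⟨p, hp, fun v hv => ?_⟩
    have := hp' (∫ s in a..b, (v s - u s) * k1 s, ∫ s in a..b, (v s - u s) * k2 s)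
      ⟨v, hv, rfl, rfl⟩
    simp only at this
    rw [← intervalIntegral.integral_const_mul, ← intervalIntegral.integral_const_mul,
      ← intervalIntegral.integral_add ((hv.int hu hk1 a b).const_mul _)
        ((hv.int hu hk2 a b).const_mul _)] at this
    refine le_trans (le_of_eq ?_) this
    congr 1
    funext s
    ring

lemma Prim.congr_left {a b : ℝ} {f g f' : ℝ → ℝ} (hab : a ≤ b) (h : Prim a b f f')
    (hg : ∀ t ∈ Set.Icc a b, g t = f t) : Prim a b g f' := by
  refine ⟨h.1, fun t ht => ?_⟩
  rw [hg t ht, hg a ⟨le_refl _, hab⟩, h.2 t ht]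

lemma Prim.const (a b c : ℝ) : Prim a b (fun _ => c) (fun _ => 0) := by
  refine ⟨by simp, fun t _ => by simp⟩

/-- The drift as a continuous linear map. -/
noncomputable def BF (α : ℝ) : (Fin 3 → ℝ) →L[ℝ] (Fin 3 → ℝ) :=
  LinearMap.toContinuousLinearMap
    { toFun := FS α
      map_add' := by
        intro x y; ext i; fin_cases i <;> simp [FS] <;> ring
      map_smul' := by
        intro c x; ext i; fin_cases i <;> simp [FS] <;> ring }

/-- The controlled field as a continuous linear map. -/
noncomputable def BG (α : ℝ) : (Fin 3 → ℝ) →L[ℝ] (Fin 3 → ℝ) :=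
  LinearMap.toContinuousLinearMap
    { toFun := GS α
      map_add' := by
        intro x y; ext i; fin_cases i <;> simp [GS] <;> ring
      map_smul' := by
        intro c x; ext i; fin_cases i <;> simp [GS] <;> ring }

lemma BF_apply (α : ℝ) (y : Fin 3 → ℝ) : BF α y = FS α y := rfl
lemma BG_apply (α : ℝ) (y : Fin 3 → ℝ) : BG α y = GS α y := rfl

/-- Solutions of the linear control equation with speed `w` and control `μ`, with forcing
`h • G g`. -/
def Sol (α a b w : ℝ) (μ h : ℝ → ℝ) (g y : ℝ → Fin 3 → ℝ) : Prop :=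
  ∀ i, Prim a b (fun t => y t i)
    (fun t => w * (FS α (y t) i + μ t * GS α (y t) i) + h t * GS α (g t) i)

lemma Sol.inner {α a b w : ℝ} (hab : a ≤ b) {μ h : ℝ → ℝ} {g y z : ℝ → Fin 3 → ℝ}
    (hy : Sol α a b w μ (fun _ => 0) g y) (hz : Sol α a b w μ h g z) :
    Prim a b (fun t => y t 0 * z t 0 + y t 1 * z t 1 + y t 2 * z t 2)
      (fun t => h t * (Real.sin α * (y t 2 * g t 1 - y t 1 * g t 2))) := by
  refine ((((hy 0).mul hab (hz 0)).add ((hy 1).mul hab (hz 1))).add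
    ((hy 2).mul hab (hz 2))).congr hab fun t _ => ?_
  simp [FS, GS]
  ring

lemma Sol.inner_const {α a b w : ℝ} (hab : a ≤ b) {μ : ℝ → ℝ} {g y z : ℝ → Fin 3 → ℝ}
    (hy : Sol α a b w μ (fun _ => 0) g y) (hz : Sol α a b w μ (fun _ => 0) g z) :
    ∀ t ∈ Set.Icc a b, y t 0 * z t 0 + y t 1 * z t 1 + y t 2 * z t 2 =
      y a 0 * z a 0 + y a 1 * z a 1 + y a 2 * z a 2 := by
  refine (hy.inner hab hz).eq_of_zero fun t _ => ?_
  simp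

/-- Cross product. -/
def crs (y z : Fin 3 → ℝ) : Fin 3 → ℝ :=
  ![y 1 * z 2 - y 2 * z 1, y 2 * z 0 - y 0 * z 2, y 0 * z 1 - y 1 * z 0]

lemma Sol.cross {α a b w : ℝ} (hab : a ≤ b) {μ : ℝ → ℝ} {g y z : ℝ → Fin 3 → ℝ}
    (hy : Sol α a b w μ (fun _ => 0) g y) (hz : Sol α a b w μ (fun _ => 0) g z) :
    Sol α a b w μ (fun _ => 0) g (fun t => crs (y t) (z t)) := by
  intro i
  have key : ∀ j k : Fin 3, Prim a b (fun t => y t j * z t k + (-1) * (y t k * z t j)) _ :=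
    fun j k => ((hy j).mul hab (hz k)).add (((hy k).mul hab (hz j)).const_mul (-1))
  fin_cases i
  · refine ((key 1 2).congr_left hab ?_).congr hab ?_
    · intro t _; simp [crs]; ring
    · intro t _; simp [crs, FS, GS]; ring
  · refine ((key 2 0).congr_left hab ?_).congr hab ?_
    · intro t _; simp [crs]; ring
    · intro t _; simp [crs, FS, GS]; ring
  · refine ((key 0 1).congr_left hab ?_).congr hab ?_
    · intro t _; simp [crs]; ring
    · intro t _; simp [crs, FS, GS]; ring

lemma vol_prim {a b : ℝ} (hab : a ≤ b) (f : ℝ → ℝ) (hf : Measurable f)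
    (hb : ∀ t, |f t| ≤ 2) (B : (Fin 3 → ℝ) →L[ℝ] (Fin 3 → ℝ)) (y : CX a b) (i : Fin 3) :
    Prim a b (fun t => Set.IccExtend hab (vol hab f hf hb B y) t i)
      (fun s => f s * B (Set.IccExtend hab y s) i) := by
  refine ⟨?_, fun t ht => ?_⟩
  · refine intervalIntegrable_bdd_smul hf hb ?_ a b
    exact (continuous_apply i).comp (B.continuous.comp (cont_ext hab y))
  · simp only
    rw [Set.IccExtend_of_mem hab _ ht, Set.IccExtend_of_mem hab _ (show a ∈ Set.Icc a b from ⟨le_refl _, hab⟩),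
      vol_apply_coord, vol_apply_coord]
    simp

lemma abs_one_le_two (t : ℝ) : |(fun _ : ℝ => (1 : ℝ)) t| ≤ 2 := by norm_num

/-- The nominal operator. -/
noncomputable def T0op (α : ℝ) {a b : ℝ} (hab : a ≤ b) {u : ℝ → ℝ} (hu : Adm u) :
    CX a b →L[ℝ] CX a b :=
  vol hab (fun _ => 1) measurable_const abs_one_le_two (BF α) +
    vol hab u hu.1 (fun t => (hu.2 t).trans (by norm_num)) (BG α)

/-- The operator of a control variation. -/
noncomputable def Dop (α : ℝ) {a b : ℝ} (hab : a ≤ b) {u v : ℝ → ℝ} (hu : Adm u) (hv : Adm v) :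
    CX a b →L[ℝ] CX a b :=
  vol hab (fun t => v t - u t) (hv.1.sub hu.1) (hv.sub_le hu) (BG α)

lemma T0op_isUnit (α : ℝ) {a b : ℝ} (hab : a ≤ b) {u : ℝ → ℝ} (hu : Adm u) :
    IsUnit (1 - T0op α hab hu) := by
  have bd : ∀ (f : ℝ → ℝ) (hf : Measurable f) (hb : ∀ t, |f t| ≤ 2)
      (B : (Fin 3 → ℝ) →L[ℝ] (Fin 3 → ℝ)) (y : CX a b) (t : Set.Icc a b),
      ‖vol hab f hf hb B y t‖ ≤ (2 * ‖B‖) * ∫ s in a..(t : ℝ), ‖Set.IccExtend hab y s‖ := by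
    intro f hf hb B y t
    rw [vol_apply, ← intervalIntegral.integral_const_mul]
    refine intervalIntegral.norm_integral_le_of_norm_le t.2.1 ?_ ?_
    · refine Filter.Eventually.of_forall fun s _ => ?_
      rw [norm_smul, Real.norm_eq_abs, mul_assoc]
      exact mul_le_mul (hb s) (B.le_opNorm _) (norm_nonneg _) (by norm_num)
    · exact ((cont_ext hab y).norm.const_mul _).intervalIntegrable _ _
  refine isUnit_of_causal hab _ (2 * ‖BF α‖ + 2 * ‖BG α‖) (by positivity) fun y t => ?_
  rw [add_mul]
  refine (norm_add_le _ _).trans (add_le_add (bd _ _ _ _ _ _) (bd _ _ _ _ _ _))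

lemma exists_solve {X : Type*} [NormedAddCommGroup X] [NormedSpace ℝ X]
    (T : X →L[ℝ] X) (h : IsUnit (1 - T)) (n : X) : ∃ y, y = T y + n := by
  obtain ⟨R, hR⟩ := h
  refine ⟨((R⁻¹ : (X →L[ℝ] X)ˣ) : X →L[ℝ] X) n, ?_⟩
  have h1 : (1 - T) * ((R⁻¹ : (X →L[ℝ] X)ˣ) : X →L[ℝ] X) = 1 := by rw [← hR]; exact R.mul_inv
  have := congrArg (fun L : X →L[ℝ] X => L n) h1
  exact (sub_eq_iff_eq_add'.mp this)

lemma sol_const (α : ℝ) {a b : ℝ} (hab : a ≤ b) {u : ℝ → ℝ} (hu : Adm u) (n : Fin 3 → ℝ)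
    (g : ℝ → Fin 3 → ℝ) (y : CX a b) (hy : y = T0op α hab hu y + ContinuousMap.const _ n) :
    Sol α a b 1 u (fun _ => 0) g (Set.IccExtend hab y) := by
  intro i
  have p1 := vol_prim hab (fun _ => 1) measurable_const abs_one_le_two (BF α) y i
  have p2 := vol_prim hab u hu.1 (fun t => (hu.2 t).trans (by norm_num)) (BG α) y i
  refine (((p1.add p2).add (Prim.const a b (n i))).congr_left hab ?_).congr hab ?_
  · intro t ht
    simp only [Set.IccExtend_of_mem hab _ ht]
    conv_lhs => rw [hy]
    rfl
  · intro t _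
    simp only [BF_apply, BG_apply]
    ring

lemma sol_forced (α : ℝ) {a b : ℝ} (hab : a ≤ b) {u v : ℝ → ℝ} (hu : Adm u) (hv : Adm v)
    (g Z : CX a b) (hZ : Z = T0op α hab hu Z + Dop α hab hu hv g) :
    Sol α a b 1 u (fun t => v t - u t) (Set.IccExtend hab g) (Set.IccExtend hab Z) := by
  intro i
  have p1 := vol_prim hab (fun _ => 1) measurable_const abs_one_le_two (BF α) Z i
  have p2 := vol_prim hab u hu.1 (fun t => (hu.2 t).trans (by norm_num)) (BG α) Z i
  have p3 := vol_prim hab (fun t => v t - u t) (hv.1.sub hu.1) (hv.sub_le hu) (BG α) g i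
  refine (((p1.add p2).add p3).congr_left hab ?_).congr hab ?_
  · intro t ht
    simp only [Set.IccExtend_of_mem hab _ ht]
    conv_lhs => rw [hZ]
    rfl
  · intro t _
    simp only [BF_apply, BG_apply]
    ring

lemma op_at_left (α : ℝ) {a b : ℝ} (hab : a ≤ b) {u v : ℝ → ℝ} (hu : Adm u) (hv : Adm v)
    (g Z : CX a b) (hZ : Z = T0op α hab hu Z + Dop α hab hu hv g) (i : Fin 3) :
    Set.IccExtend hab Z a i = 0 := by
  have ha : a ∈ Set.Icc a b := ⟨le_refl _, hab⟩
  rw [Set.IccExtend_of_mem hab _ ha, hZ]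
  simp only [T0op, Dop, ContinuousMap.add_apply, add_apply, Pi.add_apply, vol_apply_coord,
    intervalIntegral.integral_same, add_zero]

lemma sol_perturbed (α : ℝ) {a b : ℝ} (hab : a ≤ b) {u v1 v2 v3 v4 : ℝ → ℝ} (hu : Adm u)
    (h1 : Adm v1) (h2 : Adm v2) (h3 : Adm v3) (h4 : Adm v4) (w c1 c2 c3 c4 : ℝ)
    (g : ℝ → Fin 3 → ℝ) (n : Fin 3 → ℝ) (y : CX a b)
    (hy : y = (w • (T0op α hab hu + c1 • Dop α hab hu h1 + c2 • Dop α hab hu h2 +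
      c3 • Dop α hab hu h3 + c4 • Dop α hab hu h4)) y + ContinuousMap.const _ n) :
    Sol α a b w (fun t => u t + c1 * (v1 t - u t) + c2 * (v2 t - u t) + c3 * (v3 t - u t) +
      c4 * (v4 t - u t)) (fun _ => 0) g (Set.IccExtend hab y) ∧
      Set.IccExtend hab y a = n := by
  constructor
  · intro i
    have p1 := vol_prim hab (fun _ => 1) measurable_const abs_one_le_two (BF α) y i
    have p2 := vol_prim hab u hu.1 (fun t => (hu.2 t).trans (by norm_num)) (BG α) y i
    have q : ∀ {v : ℝ → ℝ} (hv : Adm v), Prim a b _ _ := fun {v} hv =>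
      vol_prim hab (fun t => v t - u t) (hv.1.sub hu.1) (hv.sub_le hu) (BG α) y i
    refine ((((((((p1.add p2).add ((q h1).const_mul c1)).add ((q h2).const_mul c2)).add
      ((q h3).const_mul c3)).add ((q h4).const_mul c4)).const_mul w).add
      (Prim.const a b (n i))).congr_left hab ?_).congr hab ?_
    · intro t ht
      simp only [Set.IccExtend_of_mem hab _ ht]
      conv_lhs => rw [hy]
      rfl
    · intro t _
      simp only [BF_apply, BG_apply]
      ring
  · have ha : a ∈ Set.Icc a b := ⟨le_refl _, hab⟩
    rw [Set.IccExtend_of_mem hab _ ha, hy]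
    ext i
    simp [T0op, Dop, vol_apply_coord]

/-- Euclidean scalar product on `ℝ³`. -/
def dt (y z : Fin 3 → ℝ) : ℝ := y 0 * z 0 + y 1 * z 1 + y 2 * z 2

lemma onb_complete {g q p : Fin 3 → ℝ} (hg : dt g g = 1) (hq : dt q q = 1) (hp : dt p p = 1)
    (hgq : dt g q = 0) (hgp : dt g p = 0) (hqp : dt q p = 0) (y : Fin 3 → ℝ) (i : Fin 3) :
    y i = dt y g * g i + dt y q * q i + dt y p * p i := by
  simp only [dt] at *
  have h : (!![g 0, g 1, g 2; q 0, q 1, q 2; p 0, p 1, p 2] : Matrix (Fin 3) (Fin 3) ℝ) *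
      !![g 0, q 0, p 0; g 1, q 1, p 1; g 2, q 2, p 2] = 1 := by
    ext i j
    fin_cases i <;> fin_cases j <;> simp [Matrix.mul_apply, Fin.sum_univ_three] <;> linarith
  rw [mul_eq_one_comm] at h
  have e : ∀ i j, _ := fun i j => congrFun (congrFun h i) j
  have e00 := e 0 0
  have e01 := e 0 1
  have e02 := e 0 2
  have e11 := e 1 1
  have e12 := e 1 2
  have e22 := e 2 2
  simp [Matrix.mul_apply, Fin.sum_univ_three] at e00 e01 e02 e11 e12 e22
  fin_cases i <;> simp
  · linear_combination (-(y 0)) * e00 - y 1 * e01 - y 2 * e02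
  · linear_combination (-(y 0)) * e01 - y 1 * e11 - y 2 * e12
  · linear_combination (-(y 0)) * e02 - y 1 * e12 - y 2 * e22

lemma crs_facts {g q : Fin 3 → ℝ} (hg : dt g g = 1) (hq : dt q q = 1) (hgq : dt g q = 0) :
    dt (crs g q) (crs g q) = 1 ∧ dt g (crs g q) = 0 ∧ dt q (crs g q) = 0 ∧
      crs g q 2 * g 1 - crs g q 1 * g 2 = - q 0 ∧ q 2 * g 1 - q 1 * g 2 = crs g q 0 := by
  simp only [dt, crs] at *
  refine ⟨?_, ?_, ?_, ?_, ?_⟩ <;> simp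
  · linear_combination (g 0 ^ 2 + g 1 ^ 2 + g 2 ^ 2) * hq + hg -
      (g 0 * q 0 + g 1 * q 1 + g 2 * q 2) * hgq
  · ring
  · ring
  · linear_combination g 0 * hgq - q 0 * hg
  · ring

lemma reparam (α : ℝ) {a b : ℝ} (hab : a ≤ b) {w : ℝ} (hw : 0 < w) {μ : ℝ → ℝ} (hμ : Adm μ)
    (g : ℝ → Fin 3 → ℝ) (y : CX a b) (hy : Sol α a b w μ (fun _ => 0) g (Set.IccExtend hab y))
    (hy1 : dt (Set.IccExtend hab y a) (Set.IccExtend hab y a) = 1) :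
    AdmissiblePairS α a (a + w * (b - a)) (fun τ => Set.IccExtend hab y (τ / w + (a - a / w)))
      (fun τ => μ (τ / w + (a - a / w))) := by
  have hba : 0 ≤ b - a := sub_nonneg.mpr hab
  have hmem : ∀ τ ∈ Set.Icc a (a + w * (b - a)), τ / w + (a - a / w) ∈ Set.Icc a b := by
    intro τ hτ
    have : τ / w + (a - a / w) = a + (τ - a) / w := by ring
    rw [this]
    constructor
    · have := div_nonneg (sub_nonneg.mpr hτ.1) hw.le
      linarith
    · have : (τ - a) / w ≤ b - a := by
        rw [div_le_iff₀ hw]; linarith [hτ.2]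
      linarith
  refine ⟨by nlinarith, hμ.1.comp (by fun_prop), fun t _ => hμ.2 _, ?_, ?_, ?_⟩
  · intro t ht
    have := hy.inner_const hab hy _ (hmem t ht)
    simp only [dt] at hy1
    rw [hy1] at this
    linarith
  · exact ((cont_ext hab y).comp (by fun_prop)).continuousOn
  · intro t ht i
    have h := (hy i).2 _ (hmem t ht)
    dsimp only at h
    have e : a / w + (a - a / w) = a := by ring
    rw [h, e]
    congr 1
    have := intervalIntegral.integral_comp_div_add (a := a) (b := t)
      (fun s => FS α (Set.IccExtend hab y s) i + μ s * GS α (Set.IccExtend hab y s) i)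
      hw.ne' (a - a / w)
    rw [e] at this
    rw [this, smul_eq_mul, ← intervalIntegral.integral_const_mul]
    simp

lemma mix_adm {u v1 v2 v3 v4 : ℝ → ℝ} (hu : Adm u) (h1 : Adm v1) (h2 : Adm v2) (h3 : Adm v3)
    (h4 : Adm v4) {c1 c2 c3 c4 : ℝ} (p1 : 0 ≤ c1) (p2 : 0 ≤ c2) (p3 : 0 ≤ c3) (p4 : 0 ≤ c4)
    (hc : c1 + c2 + c3 + c4 ≤ 1) :
    Adm (fun t => u t + c1 * (v1 t - u t) + c2 * (v2 t - u t) + c3 * (v3 t - u t) +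
      c4 * (v4 t - u t)) := by
  refine ⟨?_, fun t => ?_⟩
  · have := hu.1
    have := h1.1
    have := h2.1
    have := h3.1
    have := h4.1
    fun_prop
  · have e0 := abs_le.mp (hu.2 t)
    have e1 := abs_le.mp (h1.2 t)
    have e2 := abs_le.mp (h2.2 t)
    have e3 := abs_le.mp (h3.2 t)
    have e4 := abs_le.mp (h4.2 t)
    rw [abs_le]
    constructor <;>
    nlinarith [mul_nonneg p1 (sub_nonneg.mpr e1.1), mul_nonneg p1 (sub_nonneg.mpr e1.2),
      mul_nonneg p2 (sub_nonneg.mpr e2.1), mul_nonneg p2 (sub_nonneg.mpr e2.2),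
      mul_nonneg p3 (sub_nonneg.mpr e3.1), mul_nonneg p3 (sub_nonneg.mpr e3.2),
      mul_nonneg p4 (sub_nonneg.mpr e4.1), mul_nonneg p4 (sub_nonneg.mpr e4.2),
      mul_nonneg (sub_nonneg.mpr hc) (sub_nonneg.mpr e0.1),
      mul_nonneg (sub_nonneg.mpr hc) (sub_nonneg.mpr e0.2)]

/-- The functional `y ↦ c * (q · y(b))`. -/
noncomputable def fnl {a b : ℝ} (hab : a ≤ b) (c : ℝ) (q : Fin 3 → ℝ) : CX a b →L[ℝ] ℝ :=
  c • ((LinearMap.toContinuousLinearMap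
    { toFun := dt q
      map_add' := by intro x y; simp [dt]; ring
      map_smul' := by intro c x; simp [dt]; ring }).comp
    (ContinuousMap.evalCLM ℝ (⟨b, hab, le_refl b⟩ : Set.Icc a b)))

lemma fnl_apply {a b : ℝ} (hab : a ≤ b) (c : ℝ) (q : Fin 3 → ℝ) (y : CX a b) :
    fnl hab c q y = c * dt q (Set.IccExtend hab y b) := by
  rw [Set.IccExtend_of_mem hab _ (show b ∈ Set.Icc a b from ⟨hab, le_refl b⟩)]
  rfl

lemma eq_of_onb {g q p Y : Fin 3 → ℝ} (hg : dt g g = 1) (hq : dt q q = 1) (hp : dt p p = 1)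
    (hgq : dt g q = 0) (hgp : dt g p = 0) (hqp : dt q p = 0) (hA : dt q Y = 0) (hB : dt p Y = 0)
    (hC : 0 < dt g Y) (hYY : dt Y Y = 1) : Y = g := by
  have cm : ∀ x y : Fin 3 → ℝ, dt x y = dt y x := fun x y => by simp only [dt]; ring
  have cpl := onb_complete hg hq hp hgq hgp hqp Y
  rw [cm Y q, hA, cm Y p, hB, cm Y g] at cpl
  generalize dt g Y = d at *
  have cpl2 : ∀ i, Y i = d * g i := fun i => by rw [cpl i]; ring
  have hsq : d ^ 2 = 1 := by
    rw [dt, cpl2 0, cpl2 1, cpl2 2] at hYY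
    rw [dt] at hg
    linear_combination hYY - d ^ 2 * hg
  have h1 : d = 1 := by nlinarith
  ext i
  rw [cpl2 i, h1, one_mul]

/-- If the endpoint map is open to first order, one can arrive strictly earlier. -/
lemma arrive_early (α : ℝ) (hs : 0 < Real.sin α) {a b : ℝ} (hab : a ≤ b) {u : ℝ → ℝ} (hu : Adm u)
    (Γ Q : CX a b) (n q0 : Fin 3 → ℝ)
    (hn : dt n n = 1) (hq0 : dt q0 q0 = 1) (hnq : dt n q0 = 0)
    (hΓ : Γ = T0op α hab hu Γ + ContinuousMap.const _ n)
    (hQ : Q = T0op α hab hu Q + ContinuousMap.const _ q0)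
    (hΓa : Set.IccExtend hab Γ a = n) (hQa : Set.IccExtend hab Q a = q0)
    (r : ℝ) (hr : 0 < r)
    (hv : ∀ x y : ℝ, |x| ≤ r → |y| ≤ r → ∃ v, Adm v ∧
      ∫ s in a..b, (v s - u s) * crs (Set.IccExtend hab Γ s) (Set.IccExtend hab Q s) 0 = x ∧
      ∫ s in a..b, (v s - u s) * (- Set.IccExtend hab Q s 0) = y) :
    ∃ w γ' u', 0 < w ∧ w < 1 ∧ AdmissiblePairS α a (a + w * (b - a)) γ' u' ∧ γ' a = n ∧
      γ' (a + w * (b - a)) = Set.IccExtend hab Γ b := by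
  set G : ℝ → Fin 3 → ℝ := Set.IccExtend hab Γ with hG
  set q : ℝ → Fin 3 → ℝ := Set.IccExtend hab Q with hq
  set P : ℝ → Fin 3 → ℝ := fun t => crs (G t) (q t) with hP
  have hbm : b ∈ Set.Icc a b := ⟨hab, le_refl b⟩
  have sG : Sol α a b 1 u (fun _ => 0) G G := sol_const α hab hu n G Γ hΓ
  have sQ : Sol α a b 1 u (fun _ => 0) G q := sol_const α hab hu q0 G Q hQ
  have sP : Sol α a b 1 u (fun _ => 0) G P := sG.cross hab sQ
  have dG : ∀ t ∈ Set.Icc a b, dt (G t) (G t) = 1 := fun t ht => by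
    rw [dt, sG.inner_const hab sG t ht, hΓa]; exact hn
  have dQ : ∀ t ∈ Set.Icc a b, dt (q t) (q t) = 1 := fun t ht => by
    rw [dt, sQ.inner_const hab sQ t ht, hQa]; exact hq0
  have dGQ : ∀ t ∈ Set.Icc a b, dt (G t) (q t) = 0 := fun t ht => by
    rw [dt, sG.inner_const hab sQ t ht, hQa, hΓa]; exact hnq
  have fc := fun t ht => crs_facts (dG t ht) (dQ t ht) (dGQ t ht)
  -- first variations
  have var : ∀ v (hv : Adm v), ∃ Z : CX a b, Z = T0op α hab hu Z + Dop α hab hu hv Γ ∧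
      dt (q b) (Set.IccExtend hab Z b) = Real.sin α * ∫ s in a..b, (v s - u s) * P s 0 ∧
      dt (P b) (Set.IccExtend hab Z b) = Real.sin α * ∫ s in a..b, (v s - u s) * (- q s 0) := by
    intro v hv
    obtain ⟨Z, hZ⟩ := exists_solve (T0op α hab hu) (T0op_isUnit α hab hu) (Dop α hab hu hv Γ)
    have sZ := sol_forced α hab hu hv Γ Z hZ
    have hZa := op_at_left α hab hu hv Γ Z hZ
    refine ⟨Z, hZ, ?_, ?_⟩
    · have := ((sQ.inner hab sZ).congr (g' := fun t => Real.sin α * ((v t - u t) * P t 0)) hab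
        (fun t ht => by rw [(fc t ht).2.2.2.2]; ring)).2 b hbm
      simp only [hZa, mul_zero, add_zero, zero_add, intervalIntegral.integral_const_mul] at this
      exact this
    · have := ((sP.inner hab sZ).congr (g' := fun t => Real.sin α * ((v t - u t) * (- q t 0))) hab
        (fun t ht => by rw [(fc t ht).2.2.2.1]; ring)).2 b hbm
      simp only [hZa, mul_zero, add_zero, zero_add, intervalIntegral.integral_const_mul] at this
      exact this
  have r0 : |(0 : ℝ)| ≤ r := by simpa using hr.le
  have r1 : |r| ≤ r := by rw [abs_of_pos hr]
  have r2 : |(-r)| ≤ r := by rw [abs_neg, abs_of_pos hr]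
  obtain ⟨v1, a1, x1, y1⟩ := hv r 0 r1 r0
  obtain ⟨v2, a2, x2, y2⟩ := hv (-r) 0 r2 r0
  obtain ⟨v3, a3, x3, y3⟩ := hv 0 r r0 r1
  obtain ⟨v4, a4, x4, y4⟩ := hv 0 (-r) r0 r2
  obtain ⟨Z1, e1, f1, g1⟩ := var v1 a1
  obtain ⟨Z2, e2, f2, g2⟩ := var v2 a2
  obtain ⟨Z3, e3, f3, g3⟩ := var v3 a3
  obtain ⟨Z4, e4, f4, g4⟩ := var v4 a4
  have hsr : Real.sin α * r ≠ 0 := (mul_pos hs hr).ne'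
  have cm : ∀ x y : Fin 3 → ℝ, dt x y = dt y x := fun x y => by simp only [dt]; ring
  obtain ⟨k, x, z, hk, hk8, hx, hz, y, hy, hyA, hyB, hyC⟩ :=
    perturb (T0op α hab hu) (Dop α hab hu a1) (Dop α hab hu a2) (Dop α hab hu a3)
      (Dop α hab hu a4) (T0op_isUnit α hab hu) (ContinuousMap.const _ n) Γ Z1 Z2 Z3 Z4 hΓ e1 e2 e3 e4
      (fnl hab (Real.sin α * r)⁻¹ (q b)) (fnl hab (Real.sin α * r)⁻¹ (P b)) (fnl hab 1 (G b))
      (by rw [fnl_apply, cm]; rw [← hG, dGQ b hbm]; simp)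
      (by rw [fnl_apply, cm]; rw [← hG, (fc b hbm).2.1]; simp)
      (by rw [fnl_apply]; rw [← hG, dG b hbm]; simp)
      (by rw [fnl_apply, f1, x1]; field_simp)
      (by rw [fnl_apply, f2, x2]; field_simp)
      (by rw [fnl_apply, f3, x3]; simp)
      (by rw [fnl_apply, f4, x4]; simp)
      (by rw [fnl_apply, g1, y1]; simp)
      (by rw [fnl_apply, g2, y2]; simp)
      (by rw [fnl_apply, g3, y3]; field_simp)
      (by rw [fnl_apply, g4, y4]; field_simp)
      (1 / 8) (by norm_num)
  obtain ⟨sy, hya⟩ := sol_perturbed α hab hu a1 a2 a3 a4 _ _ _ _ _ G n y hy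
  rw [abs_lt] at hx hz
  have hμ := mix_adm hu a1 a2 a3 a4 (c1 := k + x) (c2 := k) (c3 := k + z) (c4 := k)
    (by linarith) hk.le (by linarith) hk.le (by linarith)
  have hw : 0 < 1 - k ^ 2 := by nlinarith
  have adm := reparam α hab hw hμ G y sy (by rw [hya]; exact hn)
  refine ⟨1 - k ^ 2, _, _, hw, by nlinarith, adm, ?_, ?_⟩
  · have : a / (1 - k ^ 2) + (a - a / (1 - k ^ 2)) = a := by ring
    simp only [this]
    exact hya
  · have : (a + (1 - k ^ 2) * (b - a)) / (1 - k ^ 2) + (a - a / (1 - k ^ 2)) = b := by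
      field_simp
      ring
    simp only [this]
    rw [fnl_apply] at hyA hyB hyC
    set Y := Set.IccExtend hab y b with hY
    have hA : dt (q b) Y = 0 := (mul_eq_zero.mp hyA).resolve_left (inv_ne_zero hsr)
    have hB : dt (P b) Y = 0 := (mul_eq_zero.mp hyB).resolve_left (inv_ne_zero hsr)
    have hC : 0 < dt (G b) Y := by simpa using hyC
    have hYY : dt Y Y = 1 := by
      rw [dt, hY, sy.inner_const hab sy b hbm, hya]; exact hn
    exact eq_of_onb (dG b hbm) (dQ b hbm) (fc b hbm).1 (dGQ b hbm) (fc b hbm).2.1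
      (fc b hbm).2.2.1 hA hB hC hYY

lemma hasDerivAt_abs_comp {m : ℝ → ℝ} {d x σ : ℝ} (hm : HasDerivAt m d x) (hσ : σ * m x = |m x|)
    (h0 : m x ≠ 0) : HasDerivAt (fun t => |m t|) (σ * d) x := by
  rcases lt_or_gt_of_ne h0 with h | h
  · have : σ = -1 := by
      rw [abs_of_neg h] at hσ
      have : (σ + 1) * m x = 0 := by linarith
      rcases mul_eq_zero.mp this with h1 | h1
      · linarith
      · exact absurd h1 h0
    subst this
    exact (hasDerivAt_abs_neg h).comp x hm
  · have : σ = 1 := by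
      rw [abs_of_pos h] at hσ
      have : (σ - 1) * m x = 0 := by linarith
      rcases mul_eq_zero.mp this with h1 | h1
      · linarith
      · exact absurd h1 h0
    subst this
    exact (hasDerivAt_abs_pos h).comp x hm

lemma hasDerivAt_abs_zero {m : ℝ → ℝ} {d x : ℝ} (hm : HasDerivAt m d x) (h0 : m x = 0)
    (hd : DifferentiableAt ℝ (fun t => |m t|) x) : HasDerivAt (fun t => |m t|) 0 x ∧ d = 0 := by
  have hmin : IsLocalMin (fun t => |m t|) x :=
    Filter.Eventually.of_forall fun t => by simp [h0]
  have h1 : HasDerivAt (fun t => |m t|) 0 x := by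
    have := hd.hasDerivAt
    rwa [hmin.deriv_eq_zero] at this
  refine ⟨h1, hm.unique ?_⟩
  rw [hasDerivAt_iff_isLittleO] at h1 ⊢
  simp only [h0, abs_zero, sub_zero, smul_zero] at h1 ⊢
  exact (Asymptotics.isLittleO_abs_left).mp h1

lemma zeros_finite (α : ℝ) (hs : 0 < Real.sin α) (hsc : Real.sin α < Real.cos α) {a b : ℝ}
    (hab : a ≤ b) {u : ℝ → ℝ} (g M : ℝ → Fin 3 → ℝ) (hMc : Continuous M)
    (sM : Sol α a b 1 u (fun _ => 0) g M) (hM2 : M a 2 = 0) (hN : 0 < dt (M a) (M a))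
    (hmax : ∀ᵐ t, t ∈ Set.Icc a b → u t * M t 0 = |M t 0|) :
    {t | t ∈ Set.Icc a b ∧ M t 0 = 0}.Finite := by
  set c := Real.cos α with hc
  set s := Real.sin α with hs'
  have c1 : Continuous (fun t => -(c * M t 1)) := by fun_prop
  set m : ℝ → ℝ := fun t => M a 0 + ∫ r in a..t, -(c * M r 1) with hm
  have dm : ∀ t, HasDerivAt m (-(c * M t 1)) t := fun t =>
    (intervalIntegral.integral_hasDerivAt_right (c1.intervalIntegrable _ _)
      (c1.stronglyMeasurableAtFilter _ _) c1.continuousAt).const_add _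
  have em : ∀ t ∈ Set.Icc a b, m t = M t 0 := by
    intro t ht
    have := ((sM 0).congr (g' := fun t => -(c * M t 1)) hab
      (fun t _ => by simp [FS, GS, hc])).2 t ht
    exact this.symm
  have p2 := (sM 2).congr (g' := fun t => s * u t * M t 1) hab
      (fun t _ => by simp [FS, GS, hs']; ring)
  -- the Hamiltonian
  have acm : AbsolutelyContinuousOnInterval (fun t => |m t|) a b := by
    obtain ⟨C, hC⟩ := isCompact_Icc.exists_bound_of_continuousOn (s := Set.Icc a b) c1.continuousOn
    have h1 : LipschitzOnWith (Real.toNNReal C) m (Set.Icc a b) := by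
      refine (convex_Icc a b).lipschitzOnWith_of_nnnorm_hasDerivWithin_le
        (fun t _ => (dm t).hasDerivWithinAt) (fun t ht => ?_)
      rw [← NNReal.coe_le_coe, coe_nnnorm]
      exact (hC t ht).trans (Real.le_coe_toNNReal C)
    have h2 := lipschitzWith_one_norm.comp_lipschitzOnWith h1
    rw [← Set.uIcc_of_le hab] at h2
    exact h2.absolutelyContinuousOnInterval
  have acH : AbsolutelyContinuousOnInterval
      (fun t => c * (∫ r in a..t, s * u r * M r 1) + s * |m t|) a b :=
    ((p2.1.absolutelyContinuousOnInterval_intervalIntegral (by simp)).const_mul c).add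
      (acm.const_mul s)
  obtain ⟨K, hK⟩ := acH.const_of_ae_hasDerivAt_zero (by
    filter_upwards [p2.1.ae_hasDerivAt_integral, acm.ae_differentiableAt, hmax]
      with x h1 h2 h3 hx
    have hx' : x ∈ Set.Icc a b := by rwa [Set.uIcc_of_le hab] at hx
    have d1 := (h1 hx a (by simp)).const_mul c
    have h3' := h3 hx'
    rw [← em x hx'] at h3'
    by_cases h0 : m x = 0
    · obtain ⟨d2, e2⟩ := hasDerivAt_abs_zero (dm x) h0 (h2 hx)
      have e3 : M x 1 = 0 := by
        have : c ≠ 0 := (hs.trans hsc).ne'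
        have e4 : c * M x 1 = 0 := by linarith
        exact (mul_eq_zero.mp e4).resolve_left this
      have := d1.add (d2.const_mul s)
      rw [e3, mul_zero, mul_zero, mul_zero, add_zero] at this
      exact this
    · have d2 := hasDerivAt_abs_comp (dm x) h3' h0
      have := d1.add (d2.const_mul s)
      convert! this using 1
      ring)
  have ham : ∀ t ∈ Set.Icc a b, c * M t 2 + s * |M t 0| = s * |M a 0| := by
    intro t ht
    have haI : a ∈ Set.Icc a b := ⟨le_refl _, hab⟩
    have h1 := hK t (by rwa [Set.uIcc_of_le hab])
    have h2 := hK a (by simp)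
    have h3 := p2.2 t ht
    simp only [intervalIntegral.integral_same, em a haI] at h2
    simp only [hM2, zero_add] at h3
    rw [← h3, em t ht] at h1
    linarith
  -- transversality of the zeros
  have trans : ∀ t ∈ Set.Icc a b, M t 0 = 0 → M t 1 ≠ 0 := by
    intro t ht h0 h1
    have e1 := ham t ht
    have e2 := sM.inner_const hab sM t ht
    rw [h0, h1, hM2] at e2
    rw [h0, abs_zero] at e1
    simp only [dt, hM2] at hN
    have e3 : (c * M t 2) ^ 2 = s ^ 2 * (M a 0) ^ 2 := by
      have : c * M t 2 = s * |M a 0| := by linarith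
      rw [this, mul_pow, sq_abs]
    have e4 : M t 2 ^ 2 = M a 0 ^ 2 + M a 1 ^ 2 := by linarith
    rw [mul_pow, e4] at e3
    have e5 : s ^ 2 < c ^ 2 := by nlinarith
    nlinarith [mul_pos (sub_pos.mpr e5) hN, mul_nonneg (sq_nonneg s) (sq_nonneg (M a 1))]
  -- zeros are isolated, hence finite
  by_contra hinf
  obtain ⟨x, hx, hacc⟩ := Set.Infinite.exists_accPt_of_subset_isCompact hinf isCompact_Icc
    (fun t ht => ht.1)
  have hclosed : IsClosed {t | t ∈ Set.Icc a b ∧ M t 0 = 0} :=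
    isClosed_Icc.inter (isClosed_eq (by fun_prop) continuous_const)
  have hxz : M x 0 = 0 := (hclosed.closure_subset hacc.clusterPt.mem_closure).2
  have hne := (dm x).eventually_ne (c := 0)
    (neg_ne_zero.mpr (mul_ne_zero (hs.trans hsc).ne' (trans x hx hxz)))
  rw [accPt_iff_frequently_nhdsNE] at hacc
  obtain ⟨t, ht1, ht2⟩ := (hacc.and_eventually hne).exists
  exact ht2 (by rw [em t ht1.1, ht1.2])

lemma clip_adm {u : ℝ → ℝ} (hu : Measurable u) : Adm (fun t => max (-1) (min 1 (u t))) := by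
  refine ⟨measurable_const.max (measurable_const.min hu), fun t => ?_⟩
  rw [abs_le]
  exact ⟨le_max_left _ _, max_le (by norm_num) (min_le_left _ _)⟩

lemma sol_at_left (α : ℝ) {a b : ℝ} (hab : a ≤ b) {u : ℝ → ℝ} (hu : Adm u) (n : Fin 3 → ℝ)
    (y : CX a b) (hy : y = T0op α hab hu y + ContinuousMap.const _ n) :
    Set.IccExtend hab y a = n := by
  have ha : a ∈ Set.Icc a b := ⟨le_refl _, hab⟩
  rw [Set.IccExtend_of_mem hab _ ha, hy]
  ext i
  simp [T0op, vol_apply_coord]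

lemma traj_eq (α : ℝ) {a b : ℝ} {γ : ℝ → Fin 3 → ℝ} {u v : ℝ → ℝ}
    (h : AdmissiblePairS α a b γ u) (hv : Adm v) (huv : ∀ t ∈ Set.Icc a b, v t = u t) :
    ∃ Γ : CX a b, (∀ t ∈ Set.Icc a b, Set.IccExtend h.hab Γ t = γ t) ∧
      Γ = T0op α h.hab hv Γ + ContinuousMap.const _ (γ a) := by
  set Γ : CX a b := ⟨fun t => γ t, h.hcont.domRestrict⟩ with hΓ
  have e : ∀ t ∈ Set.Icc a b, Set.IccExtend h.hab Γ t = γ t := fun t ht => by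
    rw [Set.IccExtend_of_mem h.hab _ ht]; rfl
  refine ⟨Γ, e, ?_⟩
  ext t i
  have h1 : Γ t i = γ t i := rfl
  have hi : ∀ B : (Fin 3 → ℝ) →L[ℝ] (Fin 3 → ℝ), Continuous fun s => B (Set.IccExtend h.hab Γ s) i :=
    fun B => (continuous_apply i).comp (B.continuous.comp (cont_ext h.hab Γ))
  rw [h1, h.hode t t.2 i]
  simp only [T0op, ContinuousMap.add_apply, add_apply, Pi.add_apply, vol_apply_coord,
    ContinuousMap.const_apply]
  simp only [← smul_eq_mul]
  rw [← intervalIntegral.integral_add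
    (intervalIntegrable_bdd_smul (f := fun _ => (1 : ℝ)) measurable_const abs_one_le_two (hi (BF α)) _ _)
    (intervalIntegrable_bdd_smul hv.1 (fun t => (hv.2 t).trans (by norm_num)) (hi (BG α)) _ _),
    add_comm]
  congr 1
  refine intervalIntegral.integral_congr fun s hs => ?_
  rw [Set.uIcc_of_le t.2.1] at hs
  have hs' : s ∈ Set.Icc a b := ⟨hs.1, hs.2.trans t.2.2⟩
  simp only [e s hs', BF_apply, BG_apply, huv s hs', one_mul, smul_eq_mul]

/-- The maximality condition extracted from the integral inequality. -/
lemma max_ae {a b : ℝ} (hab : a ≤ b) {u k : ℝ → ℝ} (hu : Adm u) (hk : Continuous k)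
    (h : ∀ v, Adm v → ∫ s in a..b, (v s - u s) * k s ≤ 0) :
    ∀ᵐ t, t ∈ Set.Icc a b → u t * k t = |k t| := by
  set v : ℝ → ℝ := fun t => if 0 ≤ k t then 1 else -1 with hv
  have av : Adm v := by
    refine ⟨Measurable.ite (measurableSet_le measurable_const hk.measurable) measurable_const
      measurable_const, fun t => ?_⟩
    by_cases ht : 0 ≤ k t <;> simp [hv, ht]
  have vk : ∀ t, v t * k t = |k t| := by
    intro t
    by_cases ht : 0 ≤ k t
    · simp [hv, ht, abs_of_nonneg ht]
    · simp [hv, ht, abs_of_neg (not_le.mp ht)]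
  have nn : ∀ t, 0 ≤ (v t - u t) * k t := by
    intro t
    have h1 : u t * k t ≤ |k t| := by
      refine (le_abs_self _).trans ?_
      rw [abs_mul]
      exact mul_le_of_le_one_left (abs_nonneg _) (hu.2 t)
    rw [sub_mul, vk]
    linarith
  have int := av.int hu hk a b
  have h0 : ∫ s in a..b, (v s - u s) * k s = 0 :=
    le_antisymm (h v av) (intervalIntegral.integral_nonneg hab fun t _ => nn t)
  rw [intervalIntegral.integral_of_le hab, ← integral_Icc_eq_integral_Ioc,
    integral_eq_zero_iff_of_nonneg nn
      ((intervalIntegrable_iff_integrableOn_Icc_of_le hab).mp int)] at h0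
  have h1 := (ae_restrict_iff' measurableSet_Icc).mp h0
  filter_upwards [h1] with t ht htI
  have := ht htI
  simp only [Pi.zero_apply, sub_mul, vk] at this
  linarith

lemma bang_of_zeros {a b : ℝ} {u k : ℝ → ℝ} (hk : Continuous k)
    (hmax : ∀ᵐ t, t ∈ Set.Icc a b → u t * k t = |k t|)
    (hfin : {t | t ∈ Set.Icc a b ∧ k t = 0}.Finite) :
    (∀ᵐ t ∂(volume.restrict (Set.Icc a b)), |u t| = 1) ∧
    {t | IsSwitching a b u t}.Finite := by
  constructor
  · rw [ae_restrict_iff' measurableSet_Icc]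
    have hnull : ∀ᵐ t, t ∉ {t | t ∈ Set.Icc a b ∧ k t = 0} :=
      measure_eq_zero_iff_ae_notMem.mp (hfin.measure_zero volume)
    filter_upwards [hmax, hnull] with t h1 h2 htI
    have hk0 : k t ≠ 0 := fun h => h2 ⟨htI, h⟩
    have h3 := congrArg abs (h1 htI)
    rw [abs_mul, abs_abs] at h3
    exact mul_right_cancel₀ (abs_ne_zero.mpr hk0) (by rw [h3, one_mul])
  · refine hfin.subset fun t ht => ⟨ht.1, ?_⟩
    by_contra h0
    rcases lt_or_gt_of_ne h0 with h | h
    · have ev : ∀ᶠ x in nhds t, k x < 0 := hk.continuousAt.eventually_lt_const h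
      obtain ⟨ε, hε, hb⟩ := Metric.eventually_nhds_iff_ball.mp ev
      refine ht.2 ε hε ⟨-1, Or.inr rfl, ?_⟩
      rw [ae_restrict_iff' (measurableSet_Ioo.inter measurableSet_Icc)]
      filter_upwards [hmax] with x h1 hx
      have h2 := h1 hx.2
      have h3 := hb x (by rw [Real.ball_eq_Ioo]; exact hx.1)
      rw [abs_of_neg h3] at h2
      exact mul_right_cancel₀ h3.ne (by linarith)
    · have ev : ∀ᶠ x in nhds t, 0 < k x := hk.continuousAt.eventually_const_lt h
      obtain ⟨ε, hε, hb⟩ := Metric.eventually_nhds_iff_ball.mp ev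
      refine ht.2 ε hε ⟨1, Or.inl rfl, ?_⟩
      rw [ae_restrict_iff' (measurableSet_Ioo.inter measurableSet_Icc)]
      filter_upwards [hmax] with x h1 hx
      have h2 := h1 hx.2
      have h3 := hb x (by rw [Real.ball_eq_Ioo]; exact hx.1)
      rw [abs_of_pos h3] at h2
      exact mul_right_cancel₀ h3.ne' (by linarith)

/-- Every time optimal trajectory of `(Σ)_S` starting at the north pole is regular
bang-bang. -/
theorem regular_bang_bang (α a b : ℝ) (γ : ℝ → Fin 3 → ℝ) (u : ℝ → ℝ)
    (hα : α ∈ Set.Ioo 0 (π / 4)) (hopt : TimeOptimalS α a b γ u)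
    (h0 : γ a = ![0, 0, 1]) :
    (∀ᵐ t ∂(volume.restrict (Set.Icc a b)), |u t| = 1) ∧
    {t | IsSwitching a b u t}.Finite := by
  obtain ⟨hadm, hmin⟩ := hopt
  have hab := hadm.hab
  rcases hab.eq_or_lt with hEq | hlt
  · subst hEq
    constructor
    · rw [Set.Icc_self, Measure.restrict_singleton]
      simp
    · refine (Set.finite_singleton a).subset fun t ht => ?_
      simpa using ht.1
  have hs : 0 < Real.sin α := Real.sin_pos_of_pos_of_lt_pi hα.1 (by linarith [hα.2, Real.pi_pos])
  have hsc : Real.sin α < Real.cos α := by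
    rw [← Real.sin_pi_div_two_sub]
    apply Real.sin_lt_sin_of_lt_of_le_pi_div_two <;> linarith [hα.1, hα.2, Real.pi_pos]
  set v : ℝ → ℝ := fun t => max (-1) (min 1 (u t)) with hvdef
  have hv : Adm v := clip_adm hadm.humeas
  have huv : ∀ t ∈ Set.Icc a b, v t = u t := by
    intro t ht
    have := abs_le.mp (hadm.hubound t ht)
    simp only [hvdef]
    rw [min_eq_right this.2, max_eq_right this.1]
  obtain ⟨Γ, hΓe, hΓ⟩ := traj_eq α hadm hv huv
  rw [h0] at hΓ
  obtain ⟨Q, hQ⟩ := exists_solve (T0op α hab hv) (T0op_isUnit α hab hv)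
    (ContinuousMap.const _ ![1, 0, 0])
  have hΓa := sol_at_left α hab hv _ Γ hΓ
  have hQa := sol_at_left α hab hv _ Q hQ
  have cG := cont_ext hab Γ
  have cQ := cont_ext hab Q
  set G : ℝ → Fin 3 → ℝ := Set.IccExtend hab Γ with hG
  set q : ℝ → Fin 3 → ℝ := Set.IccExtend hab Q with hq
  have cP : Continuous fun t => crs (G t) (q t) := by
    refine continuous_pi fun i => ?_
    fin_cases i <;> simp [crs] <;> fun_prop
  rcases dichotomy a b v (fun t => crs (G t) (q t) 0) (fun t => - q t 0) hv (by fun_prop)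
    (by fun_prop) with ⟨p, hp, hpm⟩ | ⟨r, hr, hrv⟩
  · have sG : Sol α a b 1 v (fun _ => 0) G G := sol_const α hab hv _ G Γ hΓ
    have sQ : Sol α a b 1 v (fun _ => 0) G q := sol_const α hab hv _ G Q hQ
    have sP := sG.cross hab sQ
    set M : ℝ → Fin 3 → ℝ := fun t i => p.1 * crs (G t) (q t) i + (-p.2) * q t i with hM
    have cM : Continuous M := by
      refine continuous_pi fun i => ?_
      simp only [hM]
      fun_prop
    have sM : Sol α a b 1 v (fun _ => 0) G M := by
      intro i
      refine (((sP i).const_mul p.1).add ((sQ i).const_mul (-p.2))).congr hab fun t _ => ?_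
      fin_cases i <;> simp [FS, GS, hM] <;> ring
    have hMa : M a = ![-p.2, p.1, 0] := by
      ext i
      simp only [hM, hΓa, hQa]
      fin_cases i <;> simp [crs]
    have hk : ∀ t, p.1 * crs (G t) (q t) 0 + p.2 * (- q t 0) = M t 0 := fun t => by
      simp only [hM]; ring
    simp only [hk] at hpm
    have hmax := max_ae hab hv (by fun_prop : Continuous fun t => M t 0) hpm
    have hfin := zeros_finite α hs hsc hab G M cM sM (by rw [hMa]; simp) (by
      rw [hMa]
      simp only [dt]
      simp
      by_contra hneg
      have e1 : p.1 * p.1 = 0 := by nlinarith [mul_self_nonneg p.1, mul_self_nonneg p.2]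
      have e2 : p.2 * p.2 = 0 := by nlinarith [mul_self_nonneg p.1, mul_self_nonneg p.2]
      exact hp (Prod.ext (mul_self_eq_zero.mp e1) (mul_self_eq_zero.mp e2))) hmax
    refine bang_of_zeros (by fun_prop : Continuous fun t => M t 0) ?_ hfin
    filter_upwards [hmax] with t ht htI
    rw [← huv t htI]
    exact ht htI
  · exfalso
    obtain ⟨w, γ', u', hw0, hw1, hadm', hl, hrr⟩ := arrive_early α hs hab hv Γ Q _ _
      (by simp [dt]) (by simp [dt]) (by simp [dt]) hΓ hQ hΓa hQa r hr hrv
    have := hmin a (a + w * (b - a)) γ' u' hadm' (by rw [hl, h0])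
      (by rw [hrr]; exact hΓe b ⟨hab, le_refl b⟩)
    nlinarith
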